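/- arXiv:1509.07067 — 2 statements merged into one kernel-verified Lean document; each statement's English description precedes it below -/
import Mathlib

section
/- Let (X, ·) be a finite cycle set with exactly m orbits. For n ≥ 0 let C_n be the free abelian group on Xⁿ, with differential ∂_n(x₁,…,x_n) := ∑_{i=1}^{n−1} (−1)^i [ (x₁,…,x_{i−1},x_{i+1},…,x_n) − (x_i·x₁, …, x_i·x_{i−1}, x_i·x_{i+1}, …, x_i·x_n) ] for n ≥ 2, and ∂₁ = 0, ∂₀ = 0 (this is a chain complex). Then for every n ≥ 0 the rank of the ℤ-module H_n := ker ∂_n / im ∂_{n+1} is at least mⁿ. -/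
/-- The chain group `C_n`: the free abelian group on `Xⁿ`. -/
abbrev cycCh (X : Type*) (n : ℕ) : Type _ := (Fin n → X) →₀ ℤ

/-- The cycle-set differential `∂_{n+1} : C_{n+1} → C_n`, sending the basis
element `(x₁,…,x_{n+1})` to
`∑_{i=1}^{n} (-1)^i [(x₁,…,x̂_i,…,x_{n+1}) - (x_i·x₁,…,x_i·x_{i-1},x_i·x_{i+1},…,x_i·x_{n+1})]`. -/
noncomputable def cycBd {X : Type*} (op : X → X → X) (n : ℕ) :
    cycCh X (n + 1) →ₗ[ℤ] cycCh X n :=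
  Finsupp.lsum ℕ fun v =>
    LinearMap.toSpanSingleton ℤ (cycCh X n)
      (∑ i : Fin n, ((-1 : ℤ) ^ ((i : ℕ) + 1)) •
        (Finsupp.single (fun j => v ((Fin.castSucc i).succAbove j)) (1 : ℤ)
          - Finsupp.single
              (fun j => op (v (Fin.castSucc i)) (v ((Fin.castSucc i).succAbove j)))
              (1 : ℤ)))

/-- The full differential, with `∂_0 := 0` (trivially) and `∂_{n+1} = cycBd n`
(note `cycBd 0 = 0`, matching `∂₁ = 0`). -/
noncomputable def cycBdAll {X : Type*} (op : X → X → X) :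
    (n : ℕ) → cycCh X n →ₗ[ℤ] cycCh X (n - 1)
  | 0 => 0
  | n + 1 => cycBd op n

section helpers

open Classical in
/-- Act by the `i`-th coordinate on all the other ones. -/
noncomputable def cycTw {X : Type} (op : X → X → X) {n : ℕ} (i : Fin n) (v : Fin n → X) :
    Fin n → X := fun j => if j = i then v i else op (v i) (v j)

lemma cycTw_inj {X : Type} (op : X → X → X) (hbij : ∀ a : X, Function.Bijective (op a))
    {n : ℕ} (i : Fin n) : Function.Injective (cycTw op i) := by
  intro v w h
  have hi : v i = w i := by simpa [cycTw] using congrFun h i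
  funext j
  by_cases hj : j = i
  · rw [hj, hi]
  · have := congrFun h j
    simp only [cycTw, hj, if_false, hi] at this
    exact (hbij _).1 this

/-- The orbit set. -/
abbrev cycOrb {X : Type} (op : X → X → X) : Type := Quot (fun a b : X => ∃ y, b = op y a)

/-- The class of an element. -/
abbrev cycQ {X : Type} (op : X → X → X) (x : X) : cycOrb op := Quot.mk _ x

lemma cycQ_op {X : Type} (op : X → X → X) (a b : X) : cycQ op (op a b) = cycQ op b :=
  (Quot.sound ⟨a, rfl⟩).symm

lemma cycBd_single {X : Type} (op : X → X → X) (n : ℕ) (v : Fin (n + 1) → X) :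
    cycBd op n (Finsupp.single v 1) = ∑ i : Fin n, ((-1 : ℤ) ^ ((i : ℕ) + 1)) •
        (Finsupp.single (fun j => v ((Fin.castSucc i).succAbove j)) (1 : ℤ)
          - Finsupp.single
              (fun j => op (v (Fin.castSucc i)) (v ((Fin.castSucc i).succAbove j)))
              (1 : ℤ)) := by
  simp [cycBd]

open Classical in
/-- The tuples with given orbits. -/
noncomputable def cycS {X : Type} [Fintype X] (op : X → X → X) {n : ℕ}
    (w : Fin n → cycOrb op) : Finset (Fin n → X) :=
  Finset.univ.filter (fun v => (fun j => cycQ op (v j)) = w)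

/-- The sum over a product of orbits. -/
noncomputable def cycZ {X : Type} [Fintype X] (op : X → X → X) {n : ℕ}
    (w : Fin n → cycOrb op) : cycCh X n :=
  ∑ v ∈ cycS op w, Finsupp.single v 1

lemma cycBd_Z {X : Type} [Fintype X] (op : X → X → X)
    (hbij : ∀ a : X, Function.Bijective (op a)) {n : ℕ}
    (w : Fin (n + 1) → cycOrb op) : cycBd op n (cycZ op w) = 0 := by
  rw [cycZ, map_sum]
  simp_rw [cycBd_single]
  rw [Finset.sum_comm]
  refine Finset.sum_eq_zero fun i _ => ?_
  rw [← Finset.smul_sum, Finset.sum_sub_distrib, sub_eq_zero.2, smul_zero]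
  symm
  refine Finset.sum_bijective (cycTw op (Fin.castSucc i))
    (Finite.injective_iff_bijective.1 (cycTw_inj op hbij _)) ?_ ?_
  · intro v
    have : (fun j => cycQ op (cycTw op (Fin.castSucc i) v j)) = fun j => cycQ op (v j) := by
      funext j
      unfold cycTw
      split_ifs with h
      · rw [h]
      · exact cycQ_op _ _ _
    simp only [cycS, Finset.mem_filter, Finset.mem_univ, true_and, this]
  · intro v _
    congr 1
    funext j
    simp [cycTw, Fin.succAbove_ne]

lemma cycBdAll_Z {X : Type} [Fintype X] (op : X → X → X)
    (hbij : ∀ a : X, Function.Bijective (op a)) (n : ℕ)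
    (w : Fin n → cycOrb op) : cycBdAll op n (cycZ op w) = 0 := by
  cases n with
  | zero => rfl
  | succ n => exact cycBd_Z op hbij w

/-- The projection to orbits. -/
noncomputable def cycP {X : Type} (op : X → X → X) (n : ℕ) :
    cycCh X n →ₗ[ℤ] ((Fin n → cycOrb op) →₀ ℤ) :=
  Finsupp.lmapDomain ℤ ℤ (fun v j => cycQ op (v j))

lemma cycP_bd {X : Type} (op : X → X → X) (n : ℕ) (c : cycCh X (n + 1)) :
    cycP op n (cycBd op n c) = 0 := by
  suffices h : (cycP op n).comp (cycBd op n) = 0 from LinearMap.congr_fun h c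
  refine Finsupp.lhom_ext' fun v => LinearMap.ext_ring ?_
  simp only [LinearMap.comp_apply, Finsupp.lsingle_apply, cycBd_single, map_sum, map_smul,
    map_sub, LinearMap.zero_apply]
  refine Finset.sum_eq_zero fun i _ => ?_
  simp [cycP, Finsupp.mapDomain_single, cycQ_op]

lemma cycP_Z {X : Type} [Fintype X] (op : X → X → X) {n : ℕ} (w : Fin n → cycOrb op) :
    cycP op n (cycZ op w) = Finsupp.single w ((cycS op w).card : ℤ) := by
  rw [cycZ, map_sum, Finset.sum_congr rfl (g := fun _ => Finsupp.single w (1 : ℤ))]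
  · simp
  · intro v hv
    have : (fun j => cycQ op (v j)) = w := by simpa [cycS] using hv
    simp [cycP, Finsupp.mapDomain_single, this]

lemma cycS_card {X : Type} [Fintype X] (op : X → X → X) {n : ℕ} (w : Fin n → cycOrb op) :
    ((cycS op w).card : ℤ) ≠ 0 := by
  have : (cycS op w).Nonempty :=
    ⟨fun j => (w j).out, by simp [cycS, cycQ]⟩
  exact_mod_cast this.card_pos.ne'

end helpers

/-- For a finite cycle set `X` with `m` orbits, the `n`-th Betti
number of its homology `H_n = ker ∂_n / im ∂_{n+1}` is at least `mⁿ`. -/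
theorem statement_17 {X : Type} [Finite X] (op : X → X → X)
    (hbij : ∀ a : X, Function.Bijective (op a))
    (hcyc : ∀ a b c : X, op (op a b) (op a c) = op (op b a) (op b c))
    (m : ℕ)
    (hm : Nat.card (Quot (fun a b : X => ∃ y, b = op y a)) = m) :
    ∀ n : ℕ, (m : Cardinal) ^ n ≤
      Module.rank ℤ
        (↥(LinearMap.ker (cycBdAll op n)) ⧸
          Submodule.comap (LinearMap.ker (cycBdAll op n)).subtype
            (LinearMap.range (cycBdAll op (n + 1)))) := by
  intro n
  have := Fintype.ofFinite X
  let g : (↥(LinearMap.ker (cycBdAll op n)) ⧸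
          Submodule.comap (LinearMap.ker (cycBdAll op n)).subtype
            (LinearMap.range (cycBdAll op (n + 1)))) →ₗ[ℤ] ((Fin n → cycOrb op) →₀ ℤ) :=
    Submodule.liftQ _ ((cycP op n).comp (LinearMap.ker (cycBdAll op n)).subtype) (by
      rintro ⟨c, hc⟩ ⟨d, hd⟩
      have hd' : cycBd op n d = c := hd
      change cycP op n c = 0
      rw [← hd', cycP_bd])
  let f : (Fin n → cycOrb op) → (↥(LinearMap.ker (cycBdAll op n)) ⧸
          Submodule.comap (LinearMap.ker (cycBdAll op n)).subtype
            (LinearMap.range (cycBdAll op (n + 1)))) :=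
    fun w => Submodule.Quotient.mk ⟨cycZ op w, cycBdAll_Z op hbij n w⟩
  have hgf : ∀ w, g (f w) = Finsupp.single w ((cycS op w).card : ℤ) := fun w => cycP_Z op w
  have hf : LinearIndependent ℤ f := by
    apply LinearIndependent.of_comp g
    rw [linearIndependent_iff']
    intro s a hs w hw
    have h := DFunLike.congr_fun hs w
    simp only [Function.comp_apply, hgf, Finsupp.finsetSum_apply, Finsupp.smul_apply,
      Finsupp.zero_apply] at h
    rw [Finset.sum_eq_single w] at h
    · rw [Finsupp.single_eq_same, smul_eq_mul] at h
      exact (mul_eq_zero.1 h).resolve_right (cycS_card op w)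
    · intro b _ hb
      simp [hb]
    · exact fun h => absurd hw h
  have hc := hf.cardinal_le_rank
  have hq : Cardinal.mk (cycOrb op) = m := by
    rw [← hm, Nat.cast_card]
  have he : Cardinal.mk (Fin n → cycOrb op) = (m : Cardinal) ^ n := by
    simp [hq]
  rwa [he] at hc
end

section
/- Let (X, σ) be a left non-degenerate braided set, A an abelian group, and G := G_{(X,σ)} its structure group: the group presented with generating set X and relations a·b = l(a,b)·r(a,b) (product in the free group) for all a, b ∈ X, with canonical map ι : X → G. Then: (i) there is a unique left action of G on the set X such that ι(a) acts by b ↦ a⊛b for every a ∈ X; (ii) equipping Fun(X, A) with the right G-action (γ·g)(b) := γ(g·b), the map θ ↦ ((x, y) ↦ θ(ι(x))(y)) is an isomorphism of abelian groups from Z¹(G, Fun(X,A)) := { θ : G → Fun(X,A) : θ(gh) = θ(h) + θ(g)·h for all g, h ∈ G } onto the group Z²_⋆(X, A) of star 2-cocycles, and it carries the subgroup B¹(G, Fun(X,A)) := { g ↦ γ − γ·g : γ ∈ Fun(X,A) } onto the subgroup B²_⋆(X, A) of star 2-coboundaries; consequently it induces an isomorphism of abelian groups H¹(G, Fun(X,A))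 ≅ H²(X, A) := Z²_⋆(X,A)/B²_⋆(X,A). -/
/-- `σ` applied at positions 1,2 of `X × X × X`. -/
def s12 {X : Type*} (σ : X × X → X × X) : X × X × X → X × X × X :=
  fun p => ((σ (p.1, p.2.1)).1, (σ (p.1, p.2.1)).2, p.2.2)

/-- `σ` applied at positions 2,3 of `X × X × X`. -/
def s23 {X : Type*} (σ : X × X → X × X) : X × X × X → X × X × X :=
  fun p => (p.1, σ p.2)

/-- The relations `a·b = l(a,b)·r(a,b)` of the structure group. -/
def ybRels {X : Type*} (σ : X × X → X × X) : Set (FreeGroup X) :=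
  {w | ∃ a b : X, w = FreeGroup.of a * FreeGroup.of b *
    (FreeGroup.of ((σ (a, b)).1) * FreeGroup.of ((σ (a, b)).2))⁻¹}

/-- The bijection `b ↦ a⊛b` of `X` (with inverse `b ↦ r(b,a)`). -/
def starPerm {X : Type*} (σ : X × X → X × X) (star : X → X → X)
    (hstar1 : ∀ a b : X, (σ (star b a, b)).2 = a)
    (hstar2 : ∀ a b : X, star b ((σ (a, b)).2) = a) (a : X) : Equiv.Perm X where
  toFun := fun b => star a b
  invFun := fun b => (σ (b, a)).2
  left_inv := fun b => hstar1 b a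
  right_inv := fun b => hstar2 b a

/-- The group `Z¹(G, Fun(X,A))` of 1-cocycles, where `G` acts on `X` via `φ`
and on `Fun(X,A)` by `(γ·g)(b) = γ(g·b)`. -/
def Z1sub {X A : Type*} [AddCommGroup A] {rels : Set (FreeGroup X)}
    (φ : PresentedGroup rels →* Equiv.Perm X) :
    AddSubgroup (PresentedGroup rels → X → A) where
  carrier := {θ | ∀ g h b, θ (g * h) b = θ h b + θ g (φ h b)}
  add_mem' := by
    intro θ₁ θ₂ h1 h2 g h b
    simp only [Pi.add_apply, h1 g h b, h2 g h b]
    abel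
  zero_mem' := by intro g h b; simp
  neg_mem' := by
    intro θ hθ g h b
    simp only [Pi.neg_apply, hθ g h b]
    abel

/-- The group `Z²_⋆(X, A)` of star 2-cocycles. -/
def Z2sub {X A : Type*} [AddCommGroup A] (star dot : X → X → X) :
    AddSubgroup (X × X → A) where
  carrier := {f | ∀ x y z : X,
    f (x, z) + f (star x y, star x z) = f (y, z) + f (dot y x, star y z)}
  add_mem' := by
    intro f g hf hg x y z
    simp only [Pi.add_apply]
    conv_lhs => rw [add_add_add_comm]
    rw [hf x y z, hg x y z]
    abel
  zero_mem' := by intro x y z; simp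
  neg_mem' := by
    intro f hf x y z
    simp only [Pi.neg_apply, ← neg_add]
    rw [hf x y z]

/-- The homomorphism `γ ↦ (g ↦ γ − γ·g)` whose range is `B¹(G, Fun(X,A))`. -/
def cobHom1 {X A : Type*} [AddCommGroup A] {rels : Set (FreeGroup X)}
    (φ : PresentedGroup rels →* Equiv.Perm X) :
    (X → A) →+ (PresentedGroup rels → X → A) where
  toFun γ := fun g b => γ b - γ (φ g b)
  map_zero' := by funext g b; simp
  map_add' γ δ := by funext g b; simp only [Pi.add_apply]; abel

/-- The homomorphism `γ ↦ ((x,y) ↦ γ(x⊛y) − γ(y))` whose range is `B²_⋆(X, A)`. -/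
def cobHom2 {X A : Type*} [AddCommGroup A] (star : X → X → X) :
    (X → A) →+ (X × X → A) where
  toFun γ := fun q => γ (star q.1 q.2) - γ q.2
  map_zero' := by funext q; simp
  map_add' γ δ := by funext q; simp only [Pi.add_apply]; abel

theorem star_rel {X : Type*} (σ : X × X → X × X)
    (hYB : s12 σ ∘ s23 σ ∘ s12 σ = s23 σ ∘ s12 σ ∘ s23 σ)
    (star : X → X → X)
    (hstar1 : ∀ a b : X, (σ (star b a, b)).2 = a)
    (hstar2 : ∀ a b : X, star b ((σ (a, b)).2) = a) (a b z : X) :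
    star a (star b z) = star (σ (a, b)).1 (star (σ (a, b)).2 z) := by
  have key : ∀ x : X, (σ ((σ (x, a)).2, b)).2
      = (σ ((σ (x, (σ (a, b)).1)).2, (σ (a, b)).2)).2 := by
    intro x
    have := congrArg (fun p => p.2.2) (congrFun hYB (x, a, b))
    simpa [s12, s23] using this
  have h := key (star a (star b z))
  rw [hstar1, hstar1] at h
  have h2 := congrArg (star (σ (a, b)).2) h
  rw [hstar2] at h2
  have h3 := congrArg (star (σ (a, b)).1) h2
  rw [hstar2] at h3
  exact h3.symm

theorem pg_induction {X : Type*} {rels : Set (FreeGroup X)}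
    {P : PresentedGroup rels → Prop} (g : PresentedGroup rels)
    (h1 : P 1) (hof : ∀ a, P (PresentedGroup.of a))
    (hinv : ∀ g, P g → P g⁻¹) (hmul : ∀ g h, P g → P h → P (g * h)) : P g := by
  obtain ⟨w, rfl⟩ := PresentedGroup.mk_surjective rels g
  induction w using FreeGroup.induction_on with
  | C1 => simpa using h1
  | of a => exact hof a
  | inv_of a h => rw [map_inv]; exact hinv _ h
  | mul x y hx hy => rw [map_mul]; exact hmul _ _ hx hy

/-- The twisted permutation of `X × A`. -/
def twPerm {X A : Type*} [AddCommGroup A] (p : X → Equiv.Perm X) (f : X × X → A) (a : X) :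
    Equiv.Perm (X × A) where
  toFun := fun q => (p a q.1, q.2 + f (a, q.1))
  invFun := fun q => ((p a).symm q.1, q.2 - f (a, (p a).symm q.1))
  left_inv := fun q => by simp
  right_inv := fun q => by simp

theorem z1_one {X A : Type*} [AddCommGroup A] {rels : Set (FreeGroup X)}
    (φ : PresentedGroup rels →* Equiv.Perm X) (θ : PresentedGroup rels → X → A)
    (h : ∀ g h b, θ (g * h) b = θ h b + θ g (φ h b)) (b : X) : θ 1 b = 0 := by
  have := h 1 1 b
  simpa using this

theorem z1_ext {X A : Type*} [AddCommGroup A] {rels : Set (FreeGroup X)}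
    (φ : PresentedGroup rels →* Equiv.Perm X) (θ θ' : PresentedGroup rels → X → A)
    (h : ∀ g h b, θ (g * h) b = θ h b + θ g (φ h b))
    (h' : ∀ g h b, θ' (g * h) b = θ' h b + θ' g (φ h b))
    (heq : ∀ a b, θ (PresentedGroup.of a) b = θ' (PresentedGroup.of a) b) : θ = θ' := by
  funext g
  refine pg_induction (P := fun g => θ g = θ' g) g ?_ ?_ ?_ ?_
  · funext b; rw [z1_one φ θ h, z1_one φ θ' h']
  · intro a; funext b; exact heq a b
  · intro g hg
    funext b
    have e1 := h g⁻¹ g (φ g⁻¹ b)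
    have e2 := h' g⁻¹ g (φ g⁻¹ b)
    have e3 : φ g (φ g⁻¹ b) = b := by simp
    rw [inv_mul_cancel, z1_one φ θ h, e3] at e1
    rw [inv_mul_cancel, z1_one φ θ' h', e3, ← hg] at e2
    exact add_left_cancel (e1.symm.trans e2)
  · intro g k hg hk
    funext b
    rw [h, h', hg, hk]

theorem z1_exists {X A : Type*} [AddCommGroup A] (σ : X × X → X × X)
    (φ : PresentedGroup (ybRels σ) →* Equiv.Perm X) (f : X × X → A)
    (hf : ∀ a b z, f (b, z) + f (a, φ (PresentedGroup.of b) z)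
      = f ((σ (a, b)).2, z) + f ((σ (a, b)).1, φ (PresentedGroup.of (σ (a, b)).2) z)) :
    ∃ θ : PresentedGroup (ybRels σ) → X → A,
      (∀ g h b, θ (g * h) b = θ h b + θ g (φ h b)) ∧
      ∀ a b, θ (PresentedGroup.of a) b = f (a, b) := by
  have hφ : ∀ a b : X, (PresentedGroup.of a * PresentedGroup.of b : PresentedGroup (ybRels σ))
      = PresentedGroup.of (σ (a, b)).1 * PresentedGroup.of (σ (a, b)).2 := by
    intro a b
    have h := PresentedGroup.one_of_mem (rels := ybRels σ) ⟨a, b, rfl⟩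
    rw [map_mul, map_inv, mul_inv_eq_one, map_mul, map_mul] at h
    exact h
  have hrel : ∀ w ∈ ybRels σ,
      FreeGroup.lift (twPerm (fun a => φ (PresentedGroup.of a)) f) w = 1 := by
    rintro w ⟨a, b, rfl⟩
    rw [map_mul, map_inv, mul_inv_eq_one, map_mul, map_mul]
    simp only [FreeGroup.lift_apply_of]
    ext1 ⟨z, c⟩
    refine Prod.ext ?_ ?_
    · have := congrArg (fun g => φ g z) (hφ a b)
      simpa [twPerm] using this
    · simp only [twPerm, Equiv.Perm.mul_apply, Equiv.coe_fn_mk, add_assoc]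
      rw [hf]
  let Φ := PresentedGroup.toGroup hrel
  have hΦ : ∀ a, Φ (PresentedGroup.of a) = twPerm (fun a => φ (PresentedGroup.of a)) f a :=
    fun a => PresentedGroup.toGroup.of hrel
  have main : ∀ g, ∀ b c, Φ g (b, c) = (φ g b, c + (Φ g (b, 0)).2) := by
    intro g
    refine pg_induction (P := fun g => ∀ b c, Φ g (b, c) = (φ g b, c + (Φ g (b, 0)).2)) g
      ?_ ?_ ?_ ?_
    · intro b c; simp
    · intro a b c; rw [hΦ]; simp [twPerm]
    · intro g hg b c
      have inv : ∀ c, Φ g⁻¹ (b, c) = (φ g⁻¹ b, c - (Φ g (φ g⁻¹ b, 0)).2) := by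
        intro c
        rw [map_inv, Equiv.Perm.inv_eq_iff_eq, hg]
        simp
      rw [inv c, inv 0]
      simp [sub_eq_add_neg]
    · intro g h hg hh b c
      simp only [map_mul, Equiv.Perm.mul_apply]
      rw [hh b c, hg, hh b 0, hg (φ h b) (0 + _)]
      simp [add_assoc]
  refine ⟨fun g b => (Φ g (b, 0)).2, ?_, ?_⟩
  · intro g h b
    simp only [map_mul, Equiv.Perm.mul_apply]
    rw [main h b 0, main g]
  · intro a b
    simp only [hΦ]
    simp [twPerm]

/-- For a left non-degenerate braided set `(X, σ)` with structure
group `G = ⟨X | ab = l(a,b)r(a,b)⟩`: (i) there is a unique action of `G` on `X`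
with generators acting by `b ↦ a⊛b`; (ii) `θ ↦ ((x,y) ↦ θ(ι x)(y))` is an
additive bijection from `Z¹(G, Fun(X,A))` onto the star 2-cocycles
`Z²_⋆(X,A)`, carrying `B¹` onto `B²_⋆`, and hence inducing an isomorphism
`H¹(G, Fun(X,A)) ≅ H²(X,A)`. -/
theorem statement_18 {X A : Type*} [AddCommGroup A] (σ : X × X → X × X)
    (hYB : s12 σ ∘ s23 σ ∘ s12 σ = s23 σ ∘ s12 σ ∘ s23 σ)
    (star : X → X → X)
    (hstar1 : ∀ a b : X, (σ (star b a, b)).2 = a)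
    (hstar2 : ∀ a b : X, star b ((σ (a, b)).2) = a)
    (dot : X → X → X)
    (hdot : ∀ a b : X, dot a b = (σ (star b a, b)).1) :
    (∃! φ : PresentedGroup (ybRels σ) →* Equiv.Perm X,
      ∀ a : X, φ (PresentedGroup.of a) = starPerm σ star hstar1 hstar2 a) ∧
    (∀ φ : PresentedGroup (ybRels σ) →* Equiv.Perm X,
      (∀ a : X, φ (PresentedGroup.of a) = starPerm σ star hstar1 hstar2 a) →
      Set.BijOn
        (fun (θ : PresentedGroup (ybRels σ) → X → A) =>
          fun q : X × X => θ (PresentedGroup.of q.1) q.2)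
        (Z1sub (A := A) φ : Set (PresentedGroup (ybRels σ) → X → A))
        (Z2sub (A := A) star dot : Set (X × X → A)) ∧
      (∀ θ θ' : PresentedGroup (ybRels σ) → X → A,
        (fun q : X × X => (θ + θ') (PresentedGroup.of q.1) q.2)
          = (fun q : X × X => θ (PresentedGroup.of q.1) q.2)
            + (fun q : X × X => θ' (PresentedGroup.of q.1) q.2)) ∧
      ((fun (θ : PresentedGroup (ybRels σ) → X → A) =>
          fun q : X × X => θ (PresentedGroup.of q.1) q.2) ''
          ((cobHom1 (A := A) φ).range : Set (PresentedGroup (ybRels σ) → X → A))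
        = ((cobHom2 (A := A) star).range : Set (X × X → A))) ∧
      (∃ e : (↥(Z1sub (A := A) φ) ⧸
              ((cobHom1 (A := A) φ).range.addSubgroupOf (Z1sub (A := A) φ))) ≃+
             (↥(Z2sub (A := A) star dot) ⧸
              ((cobHom2 (A := A) star).range.addSubgroupOf
                (Z2sub (A := A) star dot))),
        ∀ (θ : ↥(Z1sub (A := A) φ)) (fz : ↥(Z2sub (A := A) star dot)),
          (fz : X × X → A)
              = (fun q : X × X =>
                  (θ : PresentedGroup (ybRels σ) → X → A)
                    (PresentedGroup.of q.1) q.2) →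
          e (QuotientAddGroup.mk θ) = QuotientAddGroup.mk fz)) := by
  have hof : ∀ a b : X, (PresentedGroup.of a * PresentedGroup.of b : PresentedGroup (ybRels σ))
      = PresentedGroup.of (σ (a, b)).1 * PresentedGroup.of (σ (a, b)).2 := by
    intro a b
    have h := PresentedGroup.one_of_mem (rels := ybRels σ) ⟨a, b, rfl⟩
    rw [map_mul, map_inv, mul_inv_eq_one, map_mul, map_mul] at h
    exact h
  refine ⟨?_, ?_⟩
  · have hrel : ∀ w ∈ ybRels σ,
        FreeGroup.lift (starPerm σ star hstar1 hstar2) w = 1 := by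
      rintro w ⟨a, b, rfl⟩
      rw [map_mul, map_inv, mul_inv_eq_one, map_mul, map_mul]
      simp only [FreeGroup.lift_apply_of]
      ext1 z
      exact star_rel σ hYB star hstar1 hstar2 a b z
    refine ⟨PresentedGroup.toGroup hrel, fun a => PresentedGroup.toGroup.of hrel, ?_⟩
    intro ψ hψ
    refine PresentedGroup.ext ?_
    intro a
    rw [hψ a]
    exact (PresentedGroup.toGroup.of hrel).symm
  intro φ hφ
  have hφa : ∀ a z, φ (PresentedGroup.of a) z = star a z := by
    intro a z; rw [hφ a]; rfl
  have hmaps : ∀ θ ∈ Z1sub (A := A) φ,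
      (fun q : X × X => θ (PresentedGroup.of q.1) q.2) ∈ Z2sub (A := A) star dot := by
    intro θ hθ x y z
    have hθ' : ∀ g h b, θ (g * h) b = θ h b + θ g (φ h b) := hθ
    have h := congrArg (fun g => θ g z) (hof (star x y) x)
    simp only [hθ', hφa, hstar1, ← hdot] at h
    exact h
  have hinj : ∀ θ ∈ Z1sub (A := A) φ, ∀ θ' ∈ Z1sub (A := A) φ,
      (fun q : X × X => θ (PresentedGroup.of q.1) q.2)
        = (fun q : X × X => θ' (PresentedGroup.of q.1) q.2) → θ = θ' := by
    intro θ hθ θ' hθ' h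
    exact z1_ext φ θ θ' hθ hθ' (fun a b => congrFun h (a, b))
  have hsurj : ∀ f ∈ Z2sub (A := A) star dot, ∃ θ ∈ Z1sub (A := A) φ,
      (fun q : X × X => θ (PresentedGroup.of q.1) q.2) = f := by
    intro f hf
    have hf' : ∀ x y z : X,
      f (x, z) + f (star x y, star x z) = f (y, z) + f (dot y x, star y z) := hf
    obtain ⟨θ, h1, h2⟩ := z1_exists σ φ f (by
      intro a b z
      have h := hf' b (σ (a, b)).2 z
      rw [hdot, hstar2] at h
      rw [hφa, hφa]
      exact h)
    exact ⟨θ, h1, funext fun q => h2 q.1 q.2⟩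
  have himg : ((fun (θ : PresentedGroup (ybRels σ) → X → A) =>
          fun q : X × X => θ (PresentedGroup.of q.1) q.2) ''
          ((cobHom1 (A := A) φ).range : Set (PresentedGroup (ybRels σ) → X → A))
        = ((cobHom2 (A := A) star).range : Set (X × X → A))) := by
    ext f
    constructor
    · rintro ⟨_, ⟨γ, rfl⟩, rfl⟩
      refine ⟨-γ, ?_⟩
      funext q
      simp only [cobHom1, cobHom2, AddMonoidHom.coe_mk, ZeroHom.coe_mk, Pi.neg_apply, hφa]
      abel
    · rintro ⟨γ, rfl⟩
      refine ⟨_, ⟨-γ, rfl⟩, ?_⟩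
      funext q
      simp only [cobHom1, cobHom2, AddMonoidHom.coe_mk, ZeroHom.coe_mk, Pi.neg_apply, hφa]
      abel
  have hB1 : ∀ θ ∈ (cobHom1 (A := A) φ).range, θ ∈ Z1sub (A := A) φ := by
    rintro _ ⟨γ, rfl⟩ g h b
    simp [cobHom1]
  refine ⟨⟨hmaps, fun θ hθ θ' hθ' h => hinj θ hθ θ' hθ' h, hsurj⟩, fun _ _ => rfl, himg, ?_⟩
  let F : ↥(Z1sub (A := A) φ) →+ ↥(Z2sub (A := A) star dot) :=
    { toFun := fun θ => ⟨_, hmaps θ.1 θ.2⟩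
      map_zero' := rfl
      map_add' := fun _ _ => rfl }
  have hF : Function.Bijective F := by
    constructor
    · intro θ θ' h
      exact Subtype.ext (hinj θ.1 θ.2 θ'.1 θ'.2 (congrArg Subtype.val h))
    · intro f
      obtain ⟨θ, h1, h2⟩ := hsurj f.1 f.2
      exact ⟨⟨θ, h1⟩, Subtype.ext h2⟩
  let E := AddEquiv.ofBijective F hF
  refine ⟨QuotientAddGroup.congr _ _ E ?_, ?_⟩
  · ext f
    rw [AddSubgroup.mem_map, AddSubgroup.mem_addSubgroupOf]
    have hm := Set.ext_iff.1 himg f.1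
    constructor
    · rintro ⟨θ, hθ, rfl⟩
      exact hm.1 ⟨θ.1, hθ, rfl⟩
    · intro h
      obtain ⟨θ, hθ, e⟩ := hm.2 h
      exact ⟨⟨θ, hB1 θ hθ⟩, hθ, Subtype.ext e⟩
  · intro θ fz h
    have : fz = E θ := Subtype.ext h
    rw [this]
    rfl
end
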